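/- (Existence and uniqueness of the maximal right divisor.) For every β ∈ B_n^{+*} and every subset I ⊆ {1, …, n}, there exists a unique β' ∈ B_I^{+*} such that β β'^{−1} ∈ B_n^{+*}, and such that for every β'' ∈ B_I^{+*} with β β''^{−1} ∈ B_n^{+*} one has β' β''^{−1} ∈ B_I^{+*}. -/

import Mathlib

/-- The defining relations of the braid group on `n` strands, inside the free group on
generators indexed by `ℕ`.  Generator `i` corresponds to the Artin generator `σ_i`
(for `1 ≤ i ≤ n-1`); generators with index `0` or `≥ n` are killed. -/
def braidRels (n : ℕ) : Set (FreeGroup ℕ) :=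
  {r | (∃ i j : ℕ, 1 ≤ i ∧ i + 2 ≤ j ∧ j ≤ n - 1 ∧
          r = FreeGroup.of i * FreeGroup.of j * (FreeGroup.of i)⁻¹ * (FreeGroup.of j)⁻¹) ∨
       (∃ i : ℕ, 1 ≤ i ∧ i + 1 ≤ n - 1 ∧
          r = FreeGroup.of i * FreeGroup.of (i+1) * FreeGroup.of i *
              (FreeGroup.of (i+1) * FreeGroup.of i * FreeGroup.of (i+1))⁻¹) ∨
       (∃ i : ℕ, (i = 0 ∨ n ≤ i) ∧ r = FreeGroup.of i)}

/-- The braid group `B_n` on `n` strands. -/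
abbrev Braid (n : ℕ) := PresentedGroup (braidRels n)

/-- The Artin generator `σ_i` of `B_n`. -/
def genσ (n i : ℕ) : Braid n := PresentedGroup.of i

/-- The band generator `a_{i,j} = (σ_{j-1} ⋯ σ_{i+1}) σ_i (σ_{i+1}⁻¹ ⋯ σ_{j-1}⁻¹)`. -/
def band (n i j : ℕ) : Braid n :=
  (((List.range' (i+1) (j-1-i)).reverse.map (genσ n)).prod) * genσ n i *
    (((List.range' (i+1) (j-1-i)).reverse.map (genσ n)).prod)⁻¹

/-- The dual braid monoid `B_n^{+*}`: the submonoid of `B_n` generated by the band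
generators `a_{i,j}`, `1 ≤ i < j ≤ n`. -/
def dualMonoid (n : ℕ) : Submonoid (Braid n) :=
  Submonoid.closure {x | ∃ i j : ℕ, 1 ≤ i ∧ i < j ∧ j ≤ n ∧ x = band n i j}

/-- The submonoid `B_I^{+*}` generated by the band generators `a_{i,j}` with `i, j ∈ I`. -/
def dualMonoidOn (n : ℕ) (I : Set ℕ) : Submonoid (Braid n) :=
  Submonoid.closure {x | ∃ i j : ℕ, i ∈ I ∧ j ∈ I ∧ 1 ≤ i ∧ i < j ∧ j ≤ n ∧ x = band n i j}

/-- Evaluation of a word in the letters `σ_i^{±1}` (a letter is a pair of an index and a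
sign, `true` meaning positive). -/
def evalWord (n : ℕ) (w : List (ℕ × Bool)) : Braid n :=
  (w.map (fun p => if p.2 then genσ n p.1 else (genσ n p.1)⁻¹)).prod

/-- `γ` is `σ_i`-positive: it is represented by a word in the letters `σ_1^{±1}, …,
σ_{n-1}^{±1}` containing at least one `σ_i`, no `σ_i⁻¹`, and no `σ_j^{±1}` with `j < i`. -/
def SigmaPositive (n i : ℕ) (γ : Braid n) : Prop :=
  ∃ w : List (ℕ × Bool),
    (∀ p ∈ w, 1 ≤ p.1 ∧ p.1 ≤ n - 1) ∧
    (i, true) ∈ w ∧ (i, false) ∉ w ∧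
    (∀ p ∈ w, i ≤ p.1) ∧
    evalWord n w = γ

/-- The Dehornoy ordering on `B_n`: `α <_D β` iff `α⁻¹β` is `σ_i`-positive for some `i`. -/
def dehornoyLt (n : ℕ) (α β : Braid n) : Prop :=
  ∃ i : ℕ, 1 ≤ i ∧ i ≤ n - 1 ∧ SigmaPositive n i (α⁻¹ * β)

namespace BKL

section generic
variable {S : Type}

/-- One application of a defining relation inside a word. -/
inductive Step (Rel : List S → List S → Prop) : List S → List S → Prop
  | mk (x u v y : List S) (h : Rel u v) : Step Rel (x ++ (u ++ y)) (x ++ (v ++ y))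

/-- Equivalence of words. -/
def E (Rel : List S → List S → Prop) : List S → List S → Prop := Relation.EqvGen (Step Rel)

variable {Rel : List S → List S → Prop}

theorem E.refl (u : List S) : E Rel u u := Relation.EqvGen.refl u
theorem E.symm {u v : List S} (h : E Rel u v) : E Rel v u := Relation.EqvGen.symm _ _ h
theorem E.trans {u v w : List S} (h : E Rel u v) (h' : E Rel v w) : E Rel u w :=
  Relation.EqvGen.trans _ _ _ h h'
theorem E.of_rel {u v : List S} (h : Rel u v) : E Rel u v := by
  have := Step.mk [] u v [] h
  simp only [List.append_nil, List.nil_append] at this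
  exact Relation.EqvGen.rel _ _ this

theorem E.left (x : List S) {u v : List S} (h : E Rel u v) : E Rel (x ++ u) (x ++ v) := by
  induction h with
  | rel _ _ h =>
    obtain ⟨x', u, v, y, h⟩ := h
    have := Step.mk (x ++ x') u v y h
    simp only [List.append_assoc] at this
    exact Relation.EqvGen.rel _ _ this
  | refl => exact E.refl _
  | symm _ _ _ ih => exact ih.symm
  | trans _ _ _ _ _ ih1 ih2 => exact ih1.trans ih2

theorem E.right (x : List S) {u v : List S} (h : E Rel u v) : E Rel (u ++ x) (v ++ x) := by
  induction h with
  | rel _ _ h =>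
    obtain ⟨x', u, v, y, h⟩ := h
    have := Step.mk x' u v (y ++ x) h
    simp only [← List.append_assoc] at this
    simp only [← List.append_assoc]
    exact Relation.EqvGen.rel _ _ this
  | refl => exact E.refl _
  | symm _ _ _ ih => exact ih.symm
  | trans _ _ _ _ _ ih1 ih2 => exact ih1.trans ih2

theorem E.append {u v u' v' : List S} (h : E Rel u v) (h' : E Rel u' v') :
    E Rel (u ++ u') (v ++ v') := (h.right u').trans (h'.left v)

theorem E.length (hl : ∀ u v, Rel u v → u.length = v.length) {u v : List S} (h : E Rel u v) :
    u.length = v.length := by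
  induction h with
  | rel _ _ h =>
    obtain ⟨x', u, v, y, h⟩ := h
    simp [hl _ _ h]
  | refl => rfl
  | symm _ _ _ ih => exact ih.symm
  | trans _ _ _ _ _ ih1 ih2 => exact ih1.trans ih2

/-- Word reversing. -/
def rev {S : Type} (f : S → S → List S) : ℕ → List S → List S → Option (List S × List S)
  | 0, _, _ => none
  | _ + 1, [], v => some (v, [])
  | _ + 1, a :: u, [] => some ([], a :: u)
  | k + 1, a :: u, b :: v =>
    match rev f k u (f a b) with
    | none => none
    | some (p', u1) =>
      match rev f k (f b a) v with
      | none => none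
      | some (v1, q1) =>
        match rev f k u1 v1 with
        | none => none
        | some (v2, u2) => some (p' ++ v2, q1 ++ u2)

/-- Effective cube condition. -/
def cubeCheck {S : Type} (f : S → S → List S) (a b c : S) : Bool :=
  match rev f 30 (f c a) (f c b) with
  | none => false
  | some (q', p') =>
    match rev f 30 (f a b) (f a c ++ q') with
    | none => false
    | some (r, r2) =>
      r2.isEmpty &&
      match rev f 30 (f b a ++ r) (f b c ++ p') with
      | none => false
      | some (x, y) => x.isEmpty && y.isEmpty

theorem rev_map {T : Type} (f : S → S → List S) (f' : T → T → List T) (g : S → T)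
    (hg : ∀ s t, f' (g s) (g t) = (f s t).map g) (k : ℕ) (u v : List S) :
    rev f' k (u.map g) (v.map g) =
      (rev f k u v).map (fun p => (p.1.map g, p.2.map g)) := by
  induction k generalizing u v with
  | zero => rfl
  | succ k ih =>
    match u, v with
    | [], v => simp [rev]
    | a :: u, [] => simp [rev]
    | a :: u, b :: v =>
      simp only [List.map_cons, rev, hg, ih]
      rcases rev f k u (f a b) with _ | ⟨p', u1⟩
      · rfl
      simp only [Option.map_some]
      rcases rev f k (f b a) v with _ | ⟨v1, q1⟩
      · rfl
      simp only [Option.map_some, ih]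
      rcases rev f k u1 v1 with _ | ⟨v2, u2⟩
      · rfl
      simp

theorem cubeCheck_map {T : Type} (f : S → S → List S) (f' : T → T → List T) (g : S → T)
    (hg : ∀ s t, f' (g s) (g t) = (f s t).map g) (a b c : S) :
    cubeCheck f' (g a) (g b) (g c) = cubeCheck f a b c := by
  unfold cubeCheck
  simp only [hg, rev_map f f' g hg]
  rcases rev f 30 (f c a) (f c b) with _ | ⟨q', p'⟩
  · rfl
  simp only [Option.map_some, ← List.map_append, rev_map f f' g hg]
  rcases rev f 30 (f a b) (f a c ++ q') with _ | ⟨r, r2⟩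
  · rfl
  simp only [Option.map_some, ← List.map_append, rev_map f f' g hg]
  rcases rev f 30 (f b a ++ r) (f b c ++ p') with _ | ⟨x, y⟩
  · simp
  simp

/-- Local lcm property for words of bounded length. -/
def IsL (Rel : List S → List S → Prop) (N : ℕ) (u v v' u' : List S) : Prop :=
  E Rel (u ++ v') (v ++ u') ∧
  ∀ X Y, (u ++ X).length ≤ N → E Rel (u ++ X) (v ++ Y) →
    ∃ Z, E Rel X (v' ++ Z) ∧ E Rel Y (u' ++ Z)

/-- Property H for letters. -/
def HN (Rel : List S → List S → Prop) (f : S → S → List S) (N : ℕ) : Prop :=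
  ∀ a b X Y, X.length + 1 ≤ N → E Rel (a :: X) (b :: Y) →
    ∃ Z, E Rel X (f a b ++ Z) ∧ E Rel Y (f b a ++ Z)

theorem rev_sound (f : S → S → List S) (hl : ∀ u v, Rel u v → u.length = v.length)
    (hf : ∀ a b, E Rel (a :: f a b) (b :: f b a)) {N : ℕ}
    (H : HN Rel f N) (k : ℕ) (u v v' u' : List S) (h : rev f k u v = some (v', u')) :
    IsL Rel N u v v' u' := by
  induction k generalizing u v v' u' with
  | zero => simp [rev] at h
  | succ k ih =>
    match u, v with
    | [], v =>
      simp only [rev, Option.some.injEq, Prod.mk.injEq] at h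
      obtain ⟨rfl, rfl⟩ := h
      exact ⟨by simpa using E.refl _, fun X Y _ h => ⟨Y, h, E.refl _⟩⟩
    | a :: u, [] =>
      simp only [rev, Option.some.injEq, Prod.mk.injEq] at h
      obtain ⟨rfl, rfl⟩ := h
      exact ⟨by simpa using E.refl _, fun X Y _ h => ⟨X, E.refl _, h.symm⟩⟩
    | a :: u, b :: v =>
      simp only [rev] at h
      rcases h1 : rev f k u (f a b) with _ | ⟨p', u1⟩
      · simp [h1] at h
      rcases h2 : rev f k (f b a) v with _ | ⟨v1, q1⟩
      · simp [h1, h2] at h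
      rcases h3 : rev f k u1 v1 with _ | ⟨v2, u2⟩
      · simp [h1, h2, h3] at h
      simp only [h1, h2, h3, Option.some.injEq, Prod.mk.injEq] at h
      obtain ⟨rfl, rfl⟩ := h
      obtain ⟨e1, l1⟩ := ih _ _ _ _ h1
      obtain ⟨e2, l2⟩ := ih _ _ _ _ h2
      obtain ⟨e3, l3⟩ := ih _ _ _ _ h3
      constructor
      · have s1 : E Rel (a :: (u ++ p') ++ v2) (a :: (f a b ++ u1) ++ v2) :=
          (e1.left [a]).right v2
        have s2 : E Rel (a :: f a b ++ (u1 ++ v2)) (b :: f b a ++ (v1 ++ u2)) :=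
          (hf a b).append e3
        have s3 : E Rel (b :: (f b a ++ v1) ++ u2) (b :: (v ++ q1) ++ u2) :=
          (e2.left [b]).right u2
        simp only [List.cons_append, List.append_assoc] at s1 s2 s3 ⊢
        exact s1.trans (s2.trans s3)
      · intro X Y hX hXY
        simp only [List.cons_append, List.length_cons] at hX
        obtain ⟨T, hT1, hT2⟩ := H a b _ _ hX hXY
        obtain ⟨Z1, hX1, hT3⟩ := l1 _ _ (by omega) hT1
        have := hT1.length hl
        have := hXY.length hl
        have := hT2.length hl
        obtain ⟨Z2, hT4, hY1⟩ := l2 _ _ (by simp at *; omega) hT2.symm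
        have := hT3.length hl
        obtain ⟨Z, hZ1, hZ2⟩ := l3 _ _ (by simp at *; omega) (hT3.symm.trans hT4)
        refine ⟨Z, ?_, ?_⟩
        · rw [List.append_assoc]; exact hX1.trans (hZ1.left _)
        · rw [List.append_assoc]; exact hY1.trans (hZ2.left _)

/-- Garside's theorem. -/
theorem H_all (f : S → S → List S) (hl : ∀ u v, Rel u v → u.length = v.length)
    (hfa : ∀ a, f a a = [])
    (hf : ∀ a b, E Rel (a :: f a b) (b :: f b a))
    (hr : ∀ u v, Rel u v → ∃ a b, u = a :: f a b ∧ v = b :: f b a)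
    (hc : ∀ a b c, cubeCheck f a b c = true) (N : ℕ) : HN Rel f N := by
  induction N with
  | zero => intro a b X Y h; omega
  | succ N ih =>
    have key : ∀ w w', E Rel w w' → w.length = N + 1 → ∀ a X b Y, w = a :: X → w' = b :: Y →
        ∃ Z, E Rel X (f a b ++ Z) ∧ E Rel Y (f b a ++ Z) := by
      intro w w' h
      induction h with
      | rel _ _ h =>
        obtain ⟨x, u, v, y, h⟩ := h
        rcases x with _ | ⟨c, x⟩
        · intro _ a X b Y h1 h2
          obtain ⟨a', b', rfl, rfl⟩ := hr _ _ h
          simp only [List.nil_append, List.cons_append, List.cons.injEq] at h1 h2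
          obtain ⟨rfl, rfl⟩ := h1
          obtain ⟨rfl, rfl⟩ := h2
          exact ⟨y, E.refl _, E.refl _⟩
        · intro _ a X b Y h1 h2
          simp only [List.cons_append, List.cons.injEq] at h1 h2
          obtain ⟨rfl, rfl⟩ := h1
          obtain ⟨rfl, rfl⟩ := h2
          rw [hfa]
          exact ⟨_, E.refl _, Relation.EqvGen.symm _ _ (Relation.EqvGen.rel _ _ (Step.mk _ _ _ _ h))⟩
      | refl =>
        intro _ a X b Y h1 h2
        subst h1
        obtain ⟨rfl, rfl⟩ := List.cons.inj h2
        rw [hfa]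
        exact ⟨_, E.refl _, E.refl _⟩
      | symm u v h ih' =>
        intro hn a X b Y h1 h2
        obtain ⟨Z, hZ1, hZ2⟩ := ih' (by rw [← hn]; exact E.length hl h) b Y a X h2 h1
        exact ⟨Z, hZ2, hZ1⟩
      | trans u v w h h' ih1 ih2 =>
        intro hn a X b Y h1 h2
        have hn' : v.length = N + 1 := by rw [← hn]; exact (E.length hl h).symm
        rcases v with _ | ⟨c, W⟩
        · simp at hn'
        obtain ⟨Z, hX, hW⟩ := ih1 hn a X c W h1 rfl
        obtain ⟨Z', hW', hY⟩ := ih2 hn' c W b Y rfl h2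
        have hcube := hc a b c
        unfold cubeCheck at hcube
        rcases e1 : rev f 30 (f c a) (f c b) with _ | ⟨q', p'⟩
        · simp [e1] at hcube
        simp only [e1] at hcube
        rcases e2 : rev f 30 (f a b) (f a c ++ q') with _ | ⟨r, r2⟩
        · simp [e2] at hcube
        simp only [e2] at hcube
        rcases e3 : rev f 30 (f b a ++ r) (f b c ++ p') with _ | ⟨x, y⟩
        · simp [e3] at hcube
        simp only [e3, Bool.and_eq_true, List.isEmpty_iff] at hcube
        obtain ⟨rfl, rfl, rfl⟩ := hcube
        have r1 := (rev_sound f hl hf ih _ _ _ _ _ e1).2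
        have r2 := (rev_sound f hl hf ih _ _ _ _ _ e2).1
        have r3 := (rev_sound f hl hf ih _ _ _ _ _ e3).1
        simp only [List.append_nil] at r2 r3
        have := hW.length hl
        simp only [List.length_cons] at hn'
        obtain ⟨V, hV1, hV2⟩ := r1 Z Z' (by omega) (hW.symm.trans hW')
        refine ⟨r ++ V, ?_, ?_⟩
        · rw [← List.append_assoc]
          refine hX.trans ((hV1.left _).trans ?_)
          rw [← List.append_assoc]
          exact r2.symm.right V
        · rw [← List.append_assoc]
          refine hY.trans ((hV2.left _).trans ?_)
          rw [← List.append_assoc]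
          exact r3.symm.right V
    intro a b X Y hX h
    by_cases hX' : X.length + 1 = N + 1
    · exact key _ _ h (by simpa using hX') a X b Y rfl rfl
    · exact ih a b X Y (by omega) h

/-- Lcm of words having a common multiple, staying inside a class of letters. -/
theorem lcm_words (f : S → S → List S) (hl : ∀ u v, Rel u v → u.length = v.length)
    (hf : ∀ a b, E Rel (a :: f a b) (b :: f b a))
    (H : ∀ N, HN Rel f N) (K : S → Prop)
    (hK : ∀ a b, K a → K b → ∀ c ∈ f a b, K c) (N : ℕ) :
    ∀ u v X Y : List S, (∀ c ∈ u, K c) → (∀ c ∈ v, K c) → (u ++ X).length ≤ N →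
      E Rel (u ++ X) (v ++ Y) → ∃ v' u' Z, (∀ c ∈ v', K c) ∧ (∀ c ∈ u', K c) ∧
        E Rel (u ++ v') (v ++ u') ∧ E Rel X (v' ++ Z) ∧ E Rel Y (u' ++ Z) := by
  induction N with
  | zero =>
    intro u v X Y hu hv hN h
    have hlen := h.length hl
    simp only [List.length_append] at hN hlen
    have hu0 : u = [] := List.eq_nil_of_length_eq_zero (by omega)
    have hv0 : v = [] := List.eq_nil_of_length_eq_zero (by omega)
    subst hu0 hv0
    exact ⟨[], [], Y, by simp, by simp, E.refl _, h, E.refl _⟩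
  | succ N ih =>
    intro u v X Y hu hv hN h
    rcases u with _ | ⟨a, u⟩
    · exact ⟨v, [], Y, hv, by simp, by simpa using E.refl _, h, E.refl _⟩
    rcases v with _ | ⟨b, v⟩
    · exact ⟨[], a :: u, X, by simp, hu, by simpa using E.refl _, E.refl _, h.symm⟩
    change E Rel (a :: (u ++ X)) (b :: (v ++ Y)) at h
    have hlen := h.length hl
    simp only [List.cons_append, List.length_cons, List.length_append] at hN hlen
    obtain ⟨T, hT1, hT2⟩ := H (N + 1) a b _ _ (by simpa using hN) h
    simp only [List.mem_cons, forall_eq_or_imp] at hu hv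
    have l1 := hT1.length hl
    have l2 := hT2.length hl
    simp only [List.length_append] at l1 l2
    obtain ⟨p', u1, Z1, kp, ku, e1, hX1, hT3⟩ :=
      ih u (f a b) X T hu.2 (hK a b hu.1 hv.1) (by simp only [List.length_append]; omega) hT1
    obtain ⟨v1, q1, Z2, kv, kq, e2, hT4, hY1⟩ :=
      ih (f b a) v T Y (hK b a hv.1 hu.1) hv.2 (by simp only [List.length_append]; omega) hT2.symm
    have l3 := hT3.length hl
    obtain ⟨v2, u2, Z, kv2, ku2, e3, hZ1, hZ2⟩ :=
      ih u1 v1 Z1 Z2 ku kv (by simp only [List.length_append] at *; omega) (hT3.symm.trans hT4)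
    refine ⟨p' ++ v2, q1 ++ u2, Z, ?_, ?_, ?_, ?_, ?_⟩
    · intro c hc; rcases List.mem_append.1 hc with hc | hc
      · exact kp c hc
      · exact kv2 c hc
    · intro c hc; rcases List.mem_append.1 hc with hc | hc
      · exact kq c hc
      · exact ku2 c hc
    · have s1 : E Rel (a :: (u ++ p') ++ v2) (a :: (f a b ++ u1) ++ v2) :=
        (e1.left [a]).right v2
      have s2 : E Rel (a :: f a b ++ (u1 ++ v2)) (b :: f b a ++ (v1 ++ u2)) :=
        (hf a b).append e3
      have s3 : E Rel (b :: (f b a ++ v1) ++ u2) (b :: (v ++ q1) ++ u2) :=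
        (e2.left [b]).right u2
      simp only [List.cons_append, List.append_assoc] at s1 s2 s3 ⊢
      exact s1.trans (s2.trans s3)
    · rw [List.append_assoc]; exact hX1.trans (hZ1.left _)
    · rw [List.append_assoc]; exact hY1.trans (hZ2.left _)

end generic
section chords

/-- Chords `{i < j}`. -/
abbrev Chord (α : Type) [LinearOrder α] := {p : α × α // p.1 < p.2}

/-- The complement on raw pairs. -/
def rawf {α : Type} [LinearOrder α] (s t : α × α) : List (α × α) :=
  if s.1 = t.1 then
    if s.2 = t.2 then []
    else if s.2 < t.2 then [(s.2, t.2)] else [t]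
  else if s.2 = t.2 then
    if s.1 < t.1 then [(s.1, t.1)] else [t]
  else if s.2 = t.1 then [t]
  else if s.1 = t.2 then [(t.1, s.2)]
  else if s.1 < t.1 ∧ t.1 < s.2 ∧ s.2 < t.2 then [(s.1, t.1), (s.2, t.2)]
  else if t.1 < s.1 ∧ s.1 < t.2 ∧ t.2 < s.2 then [(t.1, s.2), (s.1, t.2)]
  else [t]

/-- All chords on six points. -/
def chords6 : List (ℕ × ℕ) :=
  [(0,1),(0,2),(0,3),(0,4),(0,5),(1,2),(1,3),(1,4),(1,5),(2,3),(2,4),(2,5),(3,4),(3,5),(4,5)]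

theorem cube6 : (chords6.all fun a => chords6.all fun b => chords6.all fun c =>
    cubeCheck rawf a b c) = true := by
  decide +kernel


variable {α : Type} [LinearOrder α]

theorem rawf_valid (s t : α × α) (hs : s.1 < s.2) (ht : t.1 < t.2) :
    ∀ p ∈ rawf s t, p.1 < p.2 := by
  intro p hp
  unfold rawf at hp
  split_ifs at hp <;> simp at hp <;> grind

theorem rawf_mem (s t : α × α) (K : α → Prop) (hs : K s.1 ∧ K s.2) (ht : K t.1 ∧ K t.2) :
    ∀ p ∈ rawf s t, K p.1 ∧ K p.2 := by
  intro p hp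
  unfold rawf at hp
  split_ifs at hp <;> simp at hp <;> grind

theorem rawf_map {γ : Type} [LinearOrder γ] (h : α → γ) (hh : StrictMono h) (s t : α × α) :
    rawf (Prod.map h h s) (Prod.map h h t) = (rawf s t).map (Prod.map h h) := by
  unfold rawf
  simp only [Prod.map_fst, Prod.map_snd, hh.lt_iff_lt, hh.injective.eq_iff]
  split_ifs <;> simp

/-- The complement on chords. -/
def cf (s t : Chord α) : List (Chord α) :=
  (rawf s.1 t.1).pmap Subtype.mk (rawf_valid s.1 t.1 s.2 t.2)

theorem cf_val (s t : Chord α) : (cf s t).map Subtype.val = rawf s.1 t.1 := by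
  simp [cf, List.map_pmap]

/-- The map on chords induced by a strictly monotone map. -/
def cmap {γ : Type} [LinearOrder γ] (h : α → γ) (hh : StrictMono h) (s : Chord α) : Chord γ :=
  ⟨Prod.map h h s.1, hh s.2⟩

theorem cf_map {γ : Type} [LinearOrder γ] (h : α → γ) (hh : StrictMono h) (s t : Chord α) :
    cf (cmap h hh s) (cmap h hh t) = (cf s t).map (cmap h hh) := by
  apply List.map_injective_iff.2 Subtype.val_injective
  rw [cf_val, List.map_map]
  have : Subtype.val ∘ cmap h hh = Prod.map h h ∘ Subtype.val := rfl
  rw [this, ← List.map_map, cf_val]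
  exact rawf_map h hh _ _

theorem cube_fin6 (a b c : Chord (Fin 6)) : cubeCheck cf a b c = true := by
  have hm : ∀ a : Chord (Fin 6), Prod.map Fin.val Fin.val a.1 ∈ chords6 := by decide
  have h := cube6
  simp only [List.all_eq_true] at h
  have h1 := h _ (hm a) _ (hm b) _ (hm c)
  rw [cubeCheck_map rawf rawf (Prod.map (Fin.val (n := 6)) (Fin.val (n := 6)))
    (fun s t => rawf_map _ Fin.val_strictMono s t),
    cubeCheck_map cf rawf Subtype.val (fun s t => (cf_val s t).symm)] at h1
  exact h1

theorem cube_int (a b c : Chord ℤ) : cubeCheck cf a b c = true := by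
  obtain ⟨t, ht, htc⟩ := Infinite.exists_superset_card_eq
    ({a.1.1, a.1.2, b.1.1, b.1.2, c.1.1, c.1.2} : Finset ℤ) 6 Finset.card_le_six
  let h := t.orderEmbOfFin htc
  have hr : ∀ x ∈ t, ∃ i, h i = x := by
    intro x hx
    have : x ∈ Set.range h := by rw [Finset.range_orderEmbOfFin]; exact hx
    exact this
  have hc : ∀ a : Chord ℤ, a.1.1 ∈ t → a.1.2 ∈ t → ∃ a', cmap h h.strictMono a' = a := by
    rintro ⟨⟨x, y⟩, hxy⟩ hx hy
    obtain ⟨i, rfl⟩ := hr _ hx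
    obtain ⟨j, rfl⟩ := hr _ hy
    exact ⟨⟨(i, j), h.strictMono.lt_iff_lt.1 hxy⟩, rfl⟩
  obtain ⟨a, rfl⟩ := hc a (ht (by simp)) (ht (by simp))
  obtain ⟨b, rfl⟩ := hc b (ht (by simp)) (ht (by simp))
  obtain ⟨c, rfl⟩ := hc c (ht (by simp)) (ht (by simp))
  rw [cubeCheck_map cf cf _ (cf_map h h.strictMono)]
  exact cube_fin6 a b c

/-- Chord constructor. -/
abbrev ch (i j : ℤ) (h : i < j) : Chord ℤ := ⟨(i, j), h⟩

/-- The defining relations (words are read from right to left). -/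
inductive CRel : List (Chord ℤ) → List (Chord ℤ) → Prop
  | t1 (i j k : ℤ) (h : i < j) (h' : j < k) :
      CRel [ch i j h, ch j k h'] [ch i k (h.trans h'), ch i j h]
  | t2 (i j k : ℤ) (h : i < j) (h' : j < k) :
      CRel [ch i k (h.trans h'), ch i j h] [ch j k h', ch i k (h.trans h')]
  | c1 (i j k l : ℤ) (h : i < j) (h' : j < k) (h'' : k < l) :
      CRel [ch i j h, ch k l h''] [ch k l h'', ch i j h]
  | c2 (i j k l : ℤ) (h : i < j) (h' : j < k) (h'' : k < l) :
      CRel [ch i l (h.trans (h'.trans h'')), ch j k h'] [ch j k h', ch i l (h.trans (h'.trans h''))]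

theorem crel_length (u v : List (Chord ℤ)) (h : CRel u v) : u.length = v.length := by
  cases h <;> rfl

theorem cf_self (a : Chord ℤ) : cf a a = [] := by
  apply List.map_injective_iff.2 Subtype.val_injective
  rw [cf_val]; simp [rawf]

theorem cf_eq_of {a b : Chord ℤ} {l : List (Chord ℤ)} (h : rawf a.1 b.1 = l.map Subtype.val) :
    cf a b = l := by
  apply List.map_injective_iff.2 Subtype.val_injective
  rw [cf_val, h]

theorem crel_cf (u v : List (Chord ℤ)) (h : CRel u v) :
    ∃ a b, u = a :: cf a b ∧ v = b :: cf b a := by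
  cases h with
  | t1 i j k h h' =>
    refine ⟨_, _, congrArg _ (cf_eq_of ?_).symm, congrArg _ (cf_eq_of ?_).symm⟩ <;>
    · simp only [rawf]; split_ifs <;> simp <;> omega
  | t2 i j k h h' =>
    refine ⟨_, _, congrArg _ (cf_eq_of ?_).symm, congrArg _ (cf_eq_of ?_).symm⟩ <;>
    · simp only [rawf]; split_ifs <;> simp <;> omega
  | c1 i j k l h h' h'' =>
    refine ⟨_, _, congrArg _ (cf_eq_of ?_).symm, congrArg _ (cf_eq_of ?_).symm⟩ <;>
    · simp only [rawf]; split_ifs <;> simp <;> omega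
  | c2 i j k l h h' h'' =>
    refine ⟨_, _, congrArg _ (cf_eq_of ?_).symm, congrArg _ (cf_eq_of ?_).symm⟩ <;>
    · simp only [rawf]; split_ifs <;> simp <;> omega

theorem cross_rel (i k j l : ℤ) (h1 : i < k) (h2 : k < j) (h3 : j < l) :
    E CRel [ch i j (by omega), ch i k h1, ch j l h3]
      [ch k l (by omega), ch i l (by omega), ch k j h2] := by
  have e1 := (E.of_rel (CRel.t1 i k j h1 h2)).symm.right [ch j l h3]
  have e2 := (E.of_rel (CRel.t1 k j l h2 h3)).left [ch i k h1]
  have e3 := ((E.of_rel (CRel.t1 i k l h1 (by omega))).trans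
    (E.of_rel (CRel.t2 i k l h1 (by omega)))).right [ch k j h2]
  exact e1.trans (e2.trans e3)

theorem cf_rel (a b : Chord ℤ) : E CRel (a :: cf a b) (b :: cf b a) := by
  obtain ⟨⟨i, j⟩, hij⟩ := a
  obtain ⟨⟨k, l⟩, hkl⟩ := b
  simp only at hij hkl
  have key : ∀ (x y : List (Chord ℤ)), E CRel (ch i j hij :: x) (ch k l hkl :: y) →
      rawf (i, j) (k, l) = x.map Subtype.val → rawf (k, l) (i, j) = y.map Subtype.val →
      E CRel (ch i j hij :: cf (ch i j hij) (ch k l hkl))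
        (ch k l hkl :: cf (ch k l hkl) (ch i j hij)) := by
    intro x y h hx hy
    rw [cf_eq_of hx, cf_eq_of hy]; exact h
  have T1 := fun (i j k : ℤ) (h : i < j) (h' : j < k) => E.of_rel (CRel.t1 i j k h h')
  have T2 := fun (i j k : ℤ) (h : i < j) (h' : j < k) => E.of_rel (CRel.t2 i j k h h')
  rcases lt_trichotomy i k with h1 | rfl | h1
  · rcases lt_trichotomy j k with h2 | rfl | h2
    · exact key [_] [_] (E.of_rel (CRel.c1 i j k l hij h2 hkl))
        (by simp only [rawf]; split_ifs <;> simp <;> omega)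
        (by simp only [rawf]; split_ifs <;> simp <;> omega)
    · exact key [_] [_] ((T1 i j l hij hkl).trans (T2 i j l hij hkl))
        (by simp only [rawf]; split_ifs <;> simp <;> omega)
        (by simp only [rawf]; split_ifs <;> simp <;> omega)
    · rcases lt_trichotomy j l with h3 | rfl | h3
      · exact key [_, _] [_, _] (cross_rel i k j l h1 h2 h3)
          (by simp only [rawf]; split_ifs <;> simp <;> omega)
          (by simp only [rawf]; split_ifs <;> simp <;> omega)
      · exact key [_] [_] (T2 i k j h1 h2)
          (by simp only [rawf]; split_ifs <;> simp <;> omega)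
          (by simp only [rawf]; split_ifs <;> simp <;> omega)
      · exact key [_] [_] (E.of_rel (CRel.c2 i k l j h1 hkl h3))
          (by simp only [rawf]; split_ifs <;> simp <;> omega)
          (by simp only [rawf]; split_ifs <;> simp <;> omega)
  · rcases lt_trichotomy j l with h3 | rfl | h3
    · exact key [_] [_] (T1 i j l hij h3)
        (by simp only [rawf]; split_ifs <;> simp <;> omega)
        (by simp only [rawf]; split_ifs <;> simp <;> omega)
    · exact key [] [] (E.refl _) (by simp [rawf]) (by simp [rawf])
    · exact key [_] [_] (T1 i l j hkl h3).symm
        (by simp only [rawf]; split_ifs <;> simp <;> omega)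
        (by simp only [rawf]; split_ifs <;> simp <;> omega)
  · rcases lt_trichotomy l i with h2 | rfl | h2
    · exact key [_] [_] (E.of_rel (CRel.c1 k l i j hkl h2 hij)).symm
        (by simp only [rawf]; split_ifs <;> simp <;> omega)
        (by simp only [rawf]; split_ifs <;> simp <;> omega)
    · exact key [_] [_] ((T1 k l j hkl hij).trans (T2 k l j hkl hij)).symm
        (by simp only [rawf]; split_ifs <;> simp <;> omega)
        (by simp only [rawf]; split_ifs <;> simp <;> omega)
    · rcases lt_trichotomy l j with h3 | rfl | h3
      · exact key [_, _] [_, _] (cross_rel k i l j h1 h2 h3).symm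
          (by simp only [rawf]; split_ifs <;> simp <;> omega)
          (by simp only [rawf]; split_ifs <;> simp <;> omega)
      · exact key [_] [_] (T2 k i l h1 h2).symm
          (by simp only [rawf]; split_ifs <;> simp <;> omega)
          (by simp only [rawf]; split_ifs <;> simp <;> omega)
      · exact key [_] [_] (E.of_rel (CRel.c2 k i j l h1 hij h3)).symm
          (by simp only [rawf]; split_ifs <;> simp <;> omega)
          (by simp only [rawf]; split_ifs <;> simp <;> omega)

theorem H_chords (N : ℕ) : HN CRel cf N :=
  H_all cf crel_length cf_self cf_rel crel_cf cube_int N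

/-- Endpoints of all letters lie in `K`. -/
def Supp (K : Set ℤ) (u : List (Chord ℤ)) : Prop := ∀ c ∈ u, c.1.1 ∈ K ∧ c.1.2 ∈ K

theorem cf_supp (K : Set ℤ) (a b : Chord ℤ) (ha : a.1.1 ∈ K ∧ a.1.2 ∈ K)
    (hb : b.1.1 ∈ K ∧ b.1.2 ∈ K) : ∀ c ∈ cf a b, c.1.1 ∈ K ∧ c.1.2 ∈ K := by
  intro c hc
  have : c.1 ∈ (cf a b).map Subtype.val := List.mem_map_of_mem hc
  rw [cf_val] at this
  exact rawf_mem _ _ (· ∈ K) ha hb _ this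

theorem lcm_chords (K : Set ℤ) (u v X Y : List (Chord ℤ)) (hu : Supp K u) (hv : Supp K v)
    (h : E CRel (u ++ X) (v ++ Y)) : ∃ v' u' Z, Supp K v' ∧ Supp K u' ∧
        E CRel (u ++ v') (v ++ u') ∧ E CRel X (v' ++ Z) ∧ E CRel Y (u' ++ Z) :=
  lcm_words cf crel_length cf_rel H_chords (fun c => c.1.1 ∈ K ∧ c.1.2 ∈ K) (cf_supp K) _
    u v X Y hu hv le_rfl h

theorem crel_supp (K : Set ℤ) {u v : List (Chord ℤ)} (h : E CRel u v) : Supp K u ↔ Supp K v := by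
  induction h with
  | rel _ _ h =>
    obtain ⟨x, u, v, y, h⟩ := h
    have : Supp K u ↔ Supp K v := by
      cases h <;> simp [Supp] <;> tauto
    unfold Supp at *
    simp only [List.mem_append, or_imp, forall_and] at *
    tauto
  | refl => exact Iff.rfl
  | symm _ _ _ ih => exact ih.symm
  | trans _ _ _ _ _ ih1 ih2 => exact ih1.trans ih2

theorem cancel_left1 (a : Chord ℤ) (X Y : List (Chord ℤ)) (h : E CRel (a :: X) (a :: Y)) :
    E CRel X Y := by
  obtain ⟨Z, h1, h2⟩ := H_chords _ a a X Y le_rfl h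
  rw [cf_self] at h1 h2
  exact h1.trans h2.symm

theorem cancel_left (u X Y : List (Chord ℤ)) (h : E CRel (u ++ X) (u ++ Y)) : E CRel X Y := by
  induction u with
  | nil => exact h
  | cons a u ih => exact ih (cancel_left1 a _ _ h)

/-- Flip of a chord. -/
def flip (c : Chord ℤ) : Chord ℤ := ⟨(-c.1.2, -c.1.1), neg_lt_neg c.2⟩

theorem flip_flip (c : Chord ℤ) : flip (flip c) = c := by
  apply Subtype.ext; simp [flip]

theorem flip_rel {u v : List (Chord ℤ)} (h : E CRel u v) :
    E CRel (u.reverse.map flip) (v.reverse.map flip) := by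
  induction h with
  | rel _ _ h =>
    obtain ⟨x, u, v, y, h⟩ := h
    have : E CRel (u.reverse.map flip) (v.reverse.map flip) := by
      cases h with
      | t1 i j k h h' =>
        have a := E.of_rel (CRel.t1 (-k) (-j) (-i) (by omega) (by omega))
        have b := E.of_rel (CRel.t2 (-k) (-j) (-i) (by omega) (by omega))
        exact a.trans b
      | t2 i j k h h' =>
        have b := E.of_rel (CRel.t2 (-k) (-j) (-i) (by omega) (by omega))
        exact b.symm
      | c1 i j k l h h' h'' =>
        exact E.of_rel (CRel.c1 (-l) (-k) (-j) (-i) (by omega) (by omega) (by omega))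
      | c2 i j k l h h' h'' =>
        exact (E.of_rel (CRel.c2 (-l) (-k) (-j) (-i) (by omega) (by omega) (by omega))).symm
    simp only [List.reverse_append, List.map_append]
    exact (this.left _).right _
  | refl => exact E.refl _
  | symm _ _ _ ih => exact ih.symm
  | trans _ _ _ _ _ ih1 ih2 => exact ih1.trans ih2

theorem cancel_right (u X Y : List (Chord ℤ)) (h : E CRel (X ++ u) (Y ++ u)) : E CRel X Y := by
  have h1 := flip_rel h
  simp only [List.reverse_append, List.map_append] at h1
  have h2 := flip_rel (cancel_left _ _ _ h1)
  have h3 : (flip ∘ flip) = id := funext flip_flip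
  simpa [← List.map_reverse, h3] using h2

end chords
section monoid

/-- The congruence defining the monoid. -/
def ncon : Con (FreeMonoid (Chord ℤ)) where
  r u v := E CRel u.toList v.toList
  iseqv := ⟨fun _ => E.refl _, fun h => h.symm, fun h h' => h.trans h'⟩
  mul' h₁ h₂ := E.append h₁ h₂

/-- The (opposite of the) abstract dual braid monoid. -/
abbrev NM := ncon.Quotient

/-- The class of a word. -/
def cls (u : List (Chord ℤ)) : NM := ncon.mk' (FreeMonoid.ofList u)

theorem cls_append (u v : List (Chord ℤ)) : cls (u ++ v) = cls u * cls v := rfl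
theorem cls_nil : cls [] = 1 := rfl
theorem cls_cons (a : Chord ℤ) (v : List (Chord ℤ)) : cls (a :: v) = cls [a] * cls v := rfl
theorem cls_eq {u v : List (Chord ℤ)} : cls u = cls v ↔ E CRel u v := ncon.eq
theorem cls_surj (x : NM) : ∃ u, cls u = x := by
  obtain ⟨w, rfl⟩ := ncon.mk'_surjective x
  exact ⟨w.toList, rfl⟩

instance : IsLeftCancelMul NM where
  mul_left_cancel x y z h := by
    obtain ⟨u, rfl⟩ := cls_surj x
    obtain ⟨v, rfl⟩ := cls_surj y
    obtain ⟨w, rfl⟩ := cls_surj z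
    exact cls_eq.2 (cancel_left _ _ _ (cls_eq.1 h))

instance : IsRightCancelMul NM where
  mul_right_cancel x y z h := by
    obtain ⟨u, rfl⟩ := cls_surj x
    obtain ⟨v, rfl⟩ := cls_surj y
    obtain ⟨w, rfl⟩ := cls_surj z
    exact cls_eq.2 (cancel_right _ _ _ (cls_eq.1 h))

/-- Atoms. -/
def A (i j : ℤ) : NM := if h : i < j then cls [ch i j h] else 1

theorem A_ch (c : Chord ℤ) : cls [c] = A c.1.1 c.1.2 := by
  unfold A; rw [dif_pos c.2]

theorem A_t1 {i j k : ℤ} (h : i < j) (h' : j < k) : A i j * A j k = A i k * A i j := by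
  simp only [A, dif_pos h, dif_pos h', dif_pos (h.trans h'), ← cls_append]
  exact cls_eq.2 (E.of_rel (CRel.t1 i j k h h'))
theorem A_t2 {i j k : ℤ} (h : i < j) (h' : j < k) : A i k * A i j = A j k * A i k := by
  simp only [A, dif_pos h, dif_pos h', dif_pos (h.trans h'), ← cls_append]
  exact cls_eq.2 (E.of_rel (CRel.t2 i j k h h'))
theorem A_t3 {i j k : ℤ} (h : i < j) (h' : j < k) : A i j * A j k = A j k * A i k :=
  (A_t1 h h').trans (A_t2 h h')
theorem A_c1 {i j k l : ℤ} (h : i < j) (h' : j < k) (h'' : k < l) :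
    A i j * A k l = A k l * A i j := by
  simp only [A, dif_pos h, dif_pos h'', ← cls_append]
  exact cls_eq.2 (E.of_rel (CRel.c1 i j k l h h' h''))

/-- The Garside element of the interval `[p, p + m]`. -/
def D (p : ℤ) : ℕ → NM
  | 0 => 1
  | m + 1 => D p m * A (p + m) (p + m + 1)

theorem D_add (p : ℤ) (m k : ℕ) : D p (m + k) = D p m * D (p + m) k := by
  induction k with
  | zero => simp [D]
  | succ k ih =>
    rw [← add_assoc, D, ih, D, mul_assoc]; push_cast; simp only [← add_assoc]

theorem D_comm_right (p : ℤ) (m : ℕ) (i j : ℤ) (hi : p + m < i) (hij : i < j) :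
    D p m * A i j = A i j * D p m := by
  induction m with
  | zero => simp [D]
  | succ m ih =>
    push_cast at hi
    rw [D, mul_assoc, A_c1 (by omega) (by omega) hij, ← mul_assoc, ih (by omega), mul_assoc]

theorem D_comm_left (p : ℤ) (m : ℕ) (i j : ℤ) (hi : j < p) (hij : i < j) :
    D p m * A i j = A i j * D p m := by
  induction m with
  | zero => simp [D]
  | succ m ih =>
    rw [D, mul_assoc, ← A_c1 hij (by omega) (by omega), ← mul_assoc, ih, mul_assoc]

theorem D_first (p : ℤ) (m : ℕ) : D p (m + 1) = A p (p + m + 1) * D p m := by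
  induction m with
  | zero => simp [D]
  | succ m ih =>
    rw [D, ih, mul_assoc, D_comm_right _ _ _ _ (by push_cast; omega) (by omega), ← mul_assoc]
    push_cast
    rw [← add_assoc, A_t1 (by omega) (by omega), mul_assoc]

theorem D_slide (p : ℤ) (m : ℕ) (j : ℤ) (hj : p + m + 1 < j) :
    D p (m + 1) * A (p + m + 1) j = A (p + m + 1) j * (A p j * D p m) := by
  rw [D_first, mul_assoc, D_comm_right _ _ _ _ (by omega) hj, ← mul_assoc,
    A_t3 (by omega) hj, mul_assoc]

theorem A_dvd_D (p : ℤ) (n : ℕ) (i j : ℤ) (hi : p ≤ i) (hij : i < j) (hj : j ≤ p + n) :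
    ∃ y, A i j * y = D p n := by
  obtain ⟨a, rfl⟩ : ∃ a : ℕ, i = p + a := ⟨(i - p).toNat, by omega⟩
  obtain ⟨b, rfl⟩ : ∃ b : ℕ, j = p + a + b + 1 := ⟨(j - (p + a) - 1).toNat, by omega⟩
  obtain ⟨c, rfl⟩ : ∃ c : ℕ, n = a + (b + 1) + c := ⟨n - (a + (b + 1)), by omega⟩
  rw [D_add, D_add, D_first (p + a)]
  rcases a with _ | a
  · refine ⟨D p b * D (p + (0 + (b + 1) : ℕ)) c, ?_⟩
    simp [D, mul_assoc]
  · have := D_slide p a (p + (a + 1 : ℕ) + b + 1) (by push_cast; omega)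
    refine ⟨A p (p + (a + 1 : ℕ) + b + 1) * D p a * D (p + (a + 1 : ℕ)) b *
      D (p + (a + 1 + (b + 1) : ℕ)) c, ?_⟩
    push_cast at this ⊢
    simp only [← add_assoc] at this ⊢
    simp only [← mul_assoc] at this ⊢
    rw [this]

theorem sigma_D (p : ℤ) (n : ℕ) (i : ℤ) (hi : p < i) (hj : i + 1 ≤ p + n) :
    A i (i + 1) * D p n = D p n * A (i - 1) i := by
  obtain ⟨m, rfl⟩ : ∃ m : ℕ, i = p + m + 1 := ⟨(i - p - 1).toNat, by omega⟩
  obtain ⟨c, rfl⟩ : ∃ c : ℕ, n = m + 1 + 1 + c := ⟨n - (m + 1 + 1), by omega⟩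
  rw [D_add, D, D]
  push_cast
  simp only [← add_assoc, add_sub_cancel_right]
  set a := A (p + m) (p + m + 1)
  set b := A (p + m + 1) (p + m + 1 + 1)
  have e1 : D p m * b = b * D p m := D_comm_right _ _ _ _ (by omega) (by omega)
  have e2 : D (p + m + 1 + 1) c * a = a * D (p + m + 1 + 1) c :=
    D_comm_left _ _ _ _ (by omega) (by omega)
  have e3 : b * (a * b) = a * (b * a) := by
    have h1 : a * b = _ := A_t1 (i := p + m) (j := p + m + 1) (k := p + m + 1 + 1)
      (by omega) (by omega)
    have h2 : a * b = _ := A_t3 (i := p + m) (j := p + m + 1) (k := p + m + 1 + 1)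
      (by omega) (by omega)
    calc b * (a * b) = b * (A (p + m) (p + m + 1 + 1) * a) := by rw [h1]
      _ = (a * b) * a := by rw [h2, mul_assoc]
      _ = _ := mul_assoc _ _ _
  calc b * (D p m * a * b * D (p + m + 1 + 1) c)
      = (b * D p m) * (a * b) * D (p + m + 1 + 1) c := by simp only [mul_assoc]
    _ = D p m * (b * (a * b)) * D (p + m + 1 + 1) c := by rw [← e1]; simp only [mul_assoc]
    _ = D p m * a * b * (a * D (p + m + 1 + 1) c) := by rw [e3]; simp only [mul_assoc]
    _ = _ := by rw [← e2]; simp only [mul_assoc]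

theorem A_D (p : ℤ) (n : ℕ) (i : ℤ) (m : ℕ) (hi : p < i) (hj : i + m + 1 ≤ p + n) :
    A i (i + m + 1) * D p n = D p n * A (i - 1) (i + m) := by
  induction m with
  | zero => simpa using sigma_D p n i hi (by simpa using hj)
  | succ m ih =>
    push_cast at hj ⊢
    apply mul_right_cancel (b := A (i - 1) (i + m))
    rw [mul_assoc, ← ih (by omega), ← mul_assoc]
    have h1 := A_t1 (i := i) (j := i + m + 1) (k := i + (m + 1) + 1) (by omega) (by omega)
    have h2 := A_t1 (i := i - 1) (j := i + m) (k := i + (m + 1)) (by omega) (by omega)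
    have h3 := sigma_D p n (i + m + 1) (by omega) (by omega)
    simp only [← add_assoc, add_sub_cancel_right] at h1 h2 h3 ih ⊢
    rw [← h1, mul_assoc, h3, ← mul_assoc, ih (by omega), mul_assoc, mul_assoc, h2]

theorem first_D (p : ℤ) (n : ℕ) : A p (p + 1) * D p (n + 1) = D p (n + 1) * A p (p + n + 1) := by
  induction n with
  | zero => simp [D]
  | succ n ih =>
    rw [D, ← mul_assoc, ih, mul_assoc, mul_assoc]
    push_cast
    rw [← add_assoc, A_t3 (by omega) (by omega)]

theorem A_D' (p : ℤ) (n : ℕ) (m : ℕ) (hj : m ≤ n) :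
    A p (p + m + 1) * D p (n + 1) = D p (n + 1) * A (p + m) (p + n + 1) := by
  induction m with
  | zero => simpa using first_D p n
  | succ m ih =>
    push_cast
    apply mul_right_cancel (b := A (p + m) (p + n + 1))
    rw [mul_assoc, ← ih (by omega), ← mul_assoc]
    have h1 := A_t1 (i := p) (j := p + m + 1) (k := p + (m + 1) + 1) (by omega) (by omega)
    have h2 := A_t2 (i := p + m) (j := p + (m + 1)) (k := p + n + 1) (by omega) (by omega)
    have h3 := sigma_D p (n + 1) (p + m + 1) (by omega) (by push_cast; omega)
    simp only [← add_assoc, add_sub_cancel_right] at h1 h2 h3 ih ⊢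
    rw [← h1, mul_assoc, h3, ← mul_assoc, ih (by omega), mul_assoc, mul_assoc, h2]

theorem quasi (p : ℤ) (n : ℕ) (i j : ℤ) (hi : p ≤ i) (hij : i < j) (hj : j ≤ p + n) (k : ℕ) :
    ∃ i' j', p ≤ i' ∧ i' < j' ∧ j' ≤ p + n ∧ A i j * D p n ^ k = D p n ^ k * A i' j' := by
  induction k generalizing i j with
  | zero => exact ⟨i, j, hi, hij, hj, by simp⟩
  | succ k ih =>
    have : ∃ i' j', p ≤ i' ∧ i' < j' ∧ j' ≤ p + n ∧ A i j * D p n = D p n * A i' j' := by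
      rcases hi.eq_or_lt with rfl | hi
      · obtain ⟨m, rfl⟩ : ∃ m : ℕ, j = p + m + 1 := ⟨(j - p - 1).toNat, by omega⟩
        obtain ⟨n, rfl⟩ : ∃ n' : ℕ, n = n' + 1 := ⟨n - 1, by omega⟩
        push_cast at *
        exact ⟨_, _, by omega, by omega, by omega, A_D' p n m (by omega)⟩
      · obtain ⟨m, rfl⟩ : ∃ m : ℕ, j = i + m + 1 := ⟨(j - i - 1).toNat, by omega⟩
        exact ⟨_, _, by omega, by omega, by omega, A_D p n i m hi hj⟩
    obtain ⟨i1, j1, h1, h2, h3, e⟩ := this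
    obtain ⟨i2, j2, h4, h5, h6, e'⟩ := ih i1 j1 h1 h2 h3
    exact ⟨i2, j2, h4, h5, h6, by rw [pow_succ', ← mul_assoc, e, mul_assoc, e', mul_assoc]⟩

theorem dvd_pow_D (p : ℤ) (n : ℕ) (u : List (Chord ℤ)) (hu : Supp (Set.Icc p (p + n)) u) :
    ∃ y k, cls u * y = D p n ^ k := by
  induction u with
  | nil => exact ⟨1, 0, by simp [cls_nil]⟩
  | cons c u ih =>
    simp only [Supp, List.mem_cons, forall_eq_or_imp, Set.mem_Icc] at hu
    obtain ⟨y, k, h⟩ := ih (by simpa [Supp] using hu.2)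
    obtain ⟨i', j', h1, h2, h3, e⟩ := quasi p n c.1.1 c.1.2 hu.1.1.1 c.2 hu.1.2.2 k
    obtain ⟨z, hz⟩ := A_dvd_D p n i' j' h1 h2 h3
    refine ⟨y * z, k + 1, ?_⟩
    rw [cls_cons, A_ch, mul_assoc, ← mul_assoc (cls u), h, ← mul_assoc, e, mul_assoc, hz, pow_succ]

theorem exists_supp (u : List (Chord ℤ)) : ∃ n : ℕ, ∀ m : ℕ, n ≤ m →
    Supp (Set.Icc (-m : ℤ) (-m + (2 * m : ℕ))) u := by
  induction u with
  | nil => exact ⟨0, by simp [Supp]⟩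
  | cons c u ih =>
    obtain ⟨n, hn⟩ := ih
    refine ⟨n + c.1.1.natAbs + c.1.2.natAbs, fun m hm => ?_⟩
    have := hn m (by omega)
    simp only [Supp, List.mem_cons, forall_eq_or_imp, Set.mem_Icc] at this ⊢
    exact ⟨by omega, this⟩

theorem ore (x y : NM) : ∃ x' y', x * x' = y * y' := by
  obtain ⟨u, rfl⟩ := cls_surj x
  obtain ⟨v, rfl⟩ := cls_surj y
  obtain ⟨n, hn⟩ := exists_supp u
  obtain ⟨m, hm⟩ := exists_supp v
  obtain ⟨a, k, ha⟩ := dvd_pow_D _ _ u (hn (max n m) (le_max_left _ _))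
  obtain ⟨b, l, hb⟩ := dvd_pow_D _ _ v (hm (max n m) (le_max_right _ _))
  refine ⟨a * D (-(max n m : ℕ)) (2 * max n m) ^ l, b * D (-(max n m : ℕ)) (2 * max n m) ^ k, ?_⟩
  rw [← mul_assoc, ← mul_assoc, ha, hb, ← pow_add, ← pow_add, add_comm]

open MulOpposite in
noncomputable instance oreInst : OreLocalization.OreSet (⊤ : Submonoid NMᵐᵒᵖ) where
  ore_right_cancel r₁ r₂ s h := ⟨1, by rw [mul_right_cancel h]⟩
  oreNum r s := op (ore r.unop s.1.unop).choose_spec.choose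
  oreDenom r s := ⟨op (ore r.unop s.1.unop).choose, trivial⟩
  ore_eq r s := by
    have := (ore r.unop s.1.unop).choose_spec.choose_spec
    exact MulOpposite.unop_injective this

/-- The abstract monoid embeds (reversing products) in a group. -/
theorem embeds : ∃ (G : Type) (_ : Group G) (ι : List (Chord ℤ) → G),
    (∀ u v, ι (u ++ v) = ι v * ι u) ∧ (∀ u v, ι u = ι v ↔ E CRel u v) := by
  refine ⟨(OreLocalization (⊤ : Submonoid NMᵐᵒᵖ) NMᵐᵒᵖ)ˣ, inferInstance,
    fun u => OreLocalization.numeratorUnit ⟨MulOpposite.op (cls u), trivial⟩, ?_, ?_⟩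
  · intro u v
    apply Units.ext
    exact map_mul (OreLocalization.numeratorHom (S := (⊤ : Submonoid NMᵐᵒᵖ)))
      (MulOpposite.op (cls v)) (MulOpposite.op (cls u))
  · intro u v
    constructor
    · intro h
      have h1 := congrArg Units.val h
      obtain ⟨a, b, h2, h3⟩ := OreLocalization.oreDiv_eq_iff.1 h1
      simp only [Submonoid.coe_one, mul_one] at h3
      subst h3
      exact cls_eq.1 (MulOpposite.op_injective (mul_left_cancel h2)).symm
    · intro h
      have := cls_eq.2 h
      simp only [this]

end monoid
section braid

variable {n : ℕ}

theorem s_comm {i j : ℕ} (hi : 1 ≤ i) (hij : i + 2 ≤ j) (hj : j < n) :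
    Commute (genσ n i) (genσ n j) := by
  have h : FreeGroup.of i * FreeGroup.of j * (FreeGroup.of i)⁻¹ * (FreeGroup.of j)⁻¹
      ∈ braidRels n := Or.inl ⟨i, j, hi, hij, by omega, rfl⟩
  have h1 := PresentedGroup.one_of_mem h
  simp only [map_mul, map_inv] at h1
  have h2 : genσ n i * genσ n j * (genσ n i)⁻¹ * (genσ n j)⁻¹ = 1 := h1
  rw [mul_inv_eq_one, mul_inv_eq_iff_eq_mul] at h2
  exact h2

theorem s_braid {i : ℕ} (hi : 1 ≤ i) (hj : i + 1 < n) :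
    genσ n i * genσ n (i + 1) * genσ n i = genσ n (i + 1) * genσ n i * genσ n (i + 1) := by
  have h : FreeGroup.of i * FreeGroup.of (i+1) * FreeGroup.of i *
              (FreeGroup.of (i+1) * FreeGroup.of i * FreeGroup.of (i+1))⁻¹
      ∈ braidRels n := Or.inr (Or.inl ⟨i, hi, by omega, rfl⟩)
  have h1 := PresentedGroup.one_of_mem h
  simp only [map_mul, map_inv] at h1
  exact mul_inv_eq_one.1 h1

theorem band_base (i : ℕ) : band n i (i + 1) = genσ n i := by
  simp [band]

theorem band_succ {i j : ℕ} (h : i < j) :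
    band n i (j + 1) = genσ n j * band n i j * (genσ n j)⁻¹ := by
  obtain ⟨k, rfl⟩ : ∃ k, j = i + 1 + k := ⟨j - (i + 1), by omega⟩
  have e1 : i + 1 + k + 1 - 1 - i = k + 1 := by omega
  have e2 : i + 1 + k - 1 - i = k := by omega
  simp only [band, e1, e2, List.range'_1_concat, List.reverse_append, List.map_append,
    List.prod_append, List.reverse_singleton, List.map_singleton, List.prod_singleton, mul_inv_rev,
    mul_assoc]

theorem commute_band {x : Braid n} {k l : ℕ} (hkl : k < l)
    (h : ∀ m, k ≤ m → m < l → Commute x (genσ n m)) : Commute x (band n k l) := by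
  induction l, hkl using Nat.le_induction with
  | base => rw [band_base]; exact h k le_rfl (by omega)
  | succ l hl ih =>
    rw [band_succ hl]
    have h1 := h l (by omega) (by omega)
    exact (h1.mul_right (ih fun m h1 h2 => h m h1 (by omega))).mul_right h1.inv_right

theorem s_far {m i j : ℕ} (hi : 1 ≤ i) (hij : i < j) (hm : j < m) (hn : m < n) :
    Commute (genσ n m) (band n i j) :=
  commute_band hij fun t h1 h2 => (s_comm (by omega) (by omega) hn).symm

theorem s_nested {m i j : ℕ} (hi : 1 ≤ i) (him : i < m) (hm : m + 2 ≤ j) (hn : j ≤ n) :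
    Commute (genσ n m) (band n i j) := by
  induction j, hm using Nat.le_induction with
  | base =>
    rw [band_succ (by omega), band_succ (by omega)]
    have hb := s_braid (n := n) (i := m) (by omega) (by omega)
    have hc := s_far (n := n) (m := m + 1) (i := i) (j := m) hi him (by omega) (by omega)
    set a := genσ n m
    set b := genσ n (m + 1)
    set c := band n i m
    have e1 : a = (b * a) * b * (b * a)⁻¹ := by
      rw [eq_mul_inv_iff_mul_eq, ← hb, mul_assoc]
    have e2 : b * (a * c * a⁻¹) * b⁻¹ = (b * a) * c * (b * a)⁻¹ := by group
    rw [e2]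
    nth_rewrite 1 [e1]
    exact (Commute.conj_iff _).2 hc
  | succ j hj ih =>
    rw [band_succ (by omega)]
    have h1 : Commute (genσ n m) (genσ n j) := s_comm (by omega) hj (by omega)
    exact (h1.mul_right (ih (by omega))).mul_right h1.inv_right

theorem band_c1 {i j k l : ℕ} (hi : 1 ≤ i) (h1 : i < j) (h2 : j < k) (h3 : k < l) (h4 : l ≤ n) :
    Commute (band n i j) (band n k l) :=
  commute_band h3 fun _ _ _ => (s_far hi h1 (by omega) (by omega)).symm

theorem band_c2 {i j k l : ℕ} (hi : 1 ≤ i) (h1 : i < j) (h2 : j < k) (h3 : k < l) (h4 : l ≤ n) :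
    Commute (band n i l) (band n j k) :=
  commute_band h2 fun _ _ _ => (s_nested hi (by omega) (by omega) (by omega)).symm

theorem band_t1 {i j k : ℕ} (hi : 1 ≤ i) (h1 : i < j) (h2 : j < k) (h3 : k ≤ n) :
    band n j k * band n i j = band n i k * band n j k := by
  induction k, h2 using Nat.le_induction with
  | base => rw [band_base, band_succ h1]; group
  | succ k hk ih =>
    rw [band_succ hk, band_succ (i := i) (by omega)]
    have hc : Commute (genσ n k) (band n i j) := s_far hi h1 hk (by omega)
    have ih := ih (by omega)
    set s := genσ n k
    calc s * band n j k * s⁻¹ * band n i j = s * band n j k * (s⁻¹ * band n i j) := by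
          simp only [mul_assoc]
      _ = s * (band n j k * band n i j) * s⁻¹ := by
          rw [hc.inv_left.eq]; simp only [mul_assoc]
      _ = _ := by rw [ih]; group

theorem band_braid {i j : ℕ} (hi : 1 ≤ i) (h1 : i < j) (h3 : j < n) :
    band n i j * genσ n j * band n i j = genσ n j * band n i j * genσ n j := by
  induction j, h1 using Nat.le_induction with
  | base => rw [band_base]; exact s_braid hi h3
  | succ j hj ih =>
    have ih := ih (by omega)
    rw [band_succ hj]
    have hc : Commute (genσ n (j + 1)) (band n i j) := s_far hi hj (by omega) h3
    have hb := s_braid (n := n) (i := j) (by omega) (by omega)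
    set a := genσ n j
    set b := genσ n (j + 1)
    set c := band n i j
    have e1 : b = (a * b) * a * (a * b)⁻¹ := by
      rw [eq_mul_inv_iff_mul_eq, ← mul_assoc, ← hb]
    have e2 : a * c * a⁻¹ = (a * b) * c * (a * b)⁻¹ := by
      have : b * c * b⁻¹ = c := by rw [hc.eq]; group
      nth_rewrite 1 [← this]; group
    rw [e2]
    generalize hg : a * b = g at *
    rw [e1]
    calc g * c * g⁻¹ * (g * a * g⁻¹) * (g * c * g⁻¹) = g * (c * a * c) * g⁻¹ := by group
      _ = _ := by rw [ih]; group

theorem band_t2 {i j k : ℕ} (hi : 1 ≤ i) (h1 : i < j) (h2 : j < k) (h3 : k ≤ n) :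
    band n i j * band n i k = band n j k * band n i j := by
  induction k, h2 using Nat.le_induction with
  | base =>
    rw [band_base, band_succ h1, ← mul_assoc, ← mul_assoc, band_braid hi h1 (by omega)]; group
  | succ k hk ih =>
    rw [band_succ hk, band_succ (i := i) (by omega)]
    have hc : Commute (genσ n k) (band n i j) := s_far hi h1 hk (by omega)
    have ih := ih (by omega)
    set s := genσ n k
    calc band n i j * (s * band n i k * s⁻¹) = band n i j * s * (band n i k * s⁻¹) := by
          simp only [mul_assoc]
      _ = s * (band n i j * band n i k) * s⁻¹ := by
          rw [← hc.eq]; simp only [mul_assoc]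
      _ = s * band n j k * (band n i j * s⁻¹) := by rw [ih]; simp only [mul_assoc]
      _ = _ := by rw [← hc.inv_left.eq]; simp only [mul_assoc]

/-- Evaluation of words (read from right to left) in the braid group. -/
def ev (n : ℕ) : List (Chord ℤ) → Braid n
  | [] => 1
  | c :: u => ev n u * band n c.1.1.toNat c.1.2.toNat

theorem ev_append (u v : List (Chord ℤ)) : ev n (u ++ v) = ev n v * ev n u := by
  induction u with
  | nil => simp [ev]
  | cons c u ih => simp [ev, ih, mul_assoc]

/-- Integer version of an index set. -/
def KI (I : Set ℕ) : Set ℤ := {x | 0 ≤ x ∧ x.toNat ∈ I}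

theorem ev_rel {u v : List (Chord ℤ)} (h : CRel u v) (hu : Supp (KI (Set.Icc 1 n)) u) :
    ev n u = ev n v := by
  cases h with
  | t1 i j k h h' =>
    simp [Supp, KI] at hu
    simp only [ev, one_mul]
    exact (band_t2 (by omega) (by omega) (by omega) (by omega)).symm
  | t2 i j k h h' =>
    simp [Supp, KI] at hu
    simp only [ev, one_mul]
    rw [← band_t1 (by omega) (by omega) (by omega) (by omega)]
    exact band_t2 (by omega) (by omega) (by omega) (by omega)
  | c1 i j k l h h' h'' =>
    simp [Supp, KI] at hu
    simp only [ev, one_mul]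
    exact (band_c1 (by omega) (by omega) (by omega) (by omega) (by omega)).symm
  | c2 i j k l h h' h'' =>
    simp [Supp, KI] at hu
    simp only [ev, one_mul]
    exact (band_c2 (by omega) (by omega) (by omega) (by omega) (by omega)).symm

theorem ev_E {u v : List (Chord ℤ)} (h : E CRel u v) (hu : Supp (KI (Set.Icc 1 n)) u) :
    ev n u = ev n v := by
  induction h with
  | rel _ _ h =>
    obtain ⟨x, u, v, y, h⟩ := h
    have hu' : Supp (KI (Set.Icc 1 n)) u := fun c hc => hu c (by simp [hc])
    simp only [ev_append, ev_rel h hu']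
  | refl => rfl
  | symm _ _ h ih => exact (ih ((crel_supp _ h).2 hu)).symm
  | trans _ _ _ h _ ih1 ih2 => exact (ih1 hu).trans (ih2 ((crel_supp _ h).1 hu))

theorem exists_hom (n : ℕ) : ∃ (G : Type) (_ : Group G) (ι : List (Chord ℤ) → G) (φ : Braid n →* G),
    (∀ u v, ι u = ι v ↔ E CRel u v) ∧ ∀ u, Supp (KI (Set.Icc 1 n)) u → φ (ev n u) = ι u := by
  obtain ⟨G, _, ι, hmul, hE⟩ := embeds
  have hmul2 : ∀ a b : Chord ℤ, ι [a, b] = ι [b] * ι [a] := fun a b => hmul [a] [b]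
  have T1 : ∀ (i j k : ℤ) (h : i < j) (h' : j < k),
      ι [ch j k h'] * ι [ch i j h] = ι [ch i j h] * ι [ch i k (h.trans h')] := by
    intro i j k h h'
    rw [← hmul2, ← hmul2, hE]; exact E.of_rel (CRel.t1 i j k h h')
  have T2 : ∀ (i j k : ℤ) (h : i < j) (h' : j < k),
      ι [ch i j h] * ι [ch i k (h.trans h')] = ι [ch i k (h.trans h')] * ι [ch j k h'] := by
    intro i j k h h'
    rw [← hmul2, ← hmul2, hE]; exact E.of_rel (CRel.t2 i j k h h')
  let F : ℕ → G := fun i => if 1 ≤ i ∧ i < n then ι [ch (i : ℤ) (i + 1) (by omega)] else 1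
  have hF : ∀ i, 1 ≤ i → i < n → F i = ι [ch (i : ℤ) (i + 1) (by omega)] := by
    intro i h1 h2; simp only [F]; rw [if_pos ⟨h1, h2⟩]
  have hrel : ∀ r ∈ braidRels n, FreeGroup.lift F r = 1 := by
    rintro r (⟨i, j, hi, hij, hj, rfl⟩ | ⟨i, hi, hj, rfl⟩ | ⟨i, hi, rfl⟩)
    · simp only [map_mul, map_inv, FreeGroup.lift_apply_of]
      rw [mul_inv_eq_one, mul_inv_eq_iff_eq_mul, hF i hi (by omega), hF j (by omega) (by omega),
        ← hmul2, ← hmul2, hE]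
      exact (E.of_rel (CRel.c1 i (i + 1) j (j + 1) (by omega) (by omega) (by omega))).symm
    · simp only [map_mul, map_inv, FreeGroup.lift_apply_of]
      rw [mul_inv_eq_one, hF i hi (by omega), hF (i + 1) (by omega) (by omega)]
      push_cast
      have t1 := T1 (i : ℤ) (i + 1) (i + 1 + 1) (by omega) (by omega)
      have t2 := T2 (i : ℤ) (i + 1) (i + 1 + 1) (by omega) (by omega)
      rw [t1, mul_assoc, t1, t2, ← mul_assoc, t2]
    · simp only [FreeGroup.lift_apply_of]
      exact if_neg (by omega)
  let φ : Braid n →* G := PresentedGroup.toGroup hrel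
  have hφs : ∀ i, φ (genσ n i) = F i := fun i => PresentedGroup.toGroup.of hrel
  have hφb : ∀ (i j : ℕ) (hi : 1 ≤ i) (hij : i < j), j ≤ n →
      φ (band n i j) = ι [ch (i : ℤ) j (by omega)] := by
    intro i j hi hij
    induction j, hij using Nat.le_induction with
    | base =>
      intro hn
      rw [band_base, hφs, hF i hi (by omega)]; rfl
    | succ j hj ih =>
      intro hn
      rw [band_succ hj, map_mul, map_mul, map_inv, ih (by omega), hφs, hF j (by omega) (by omega),
        mul_inv_eq_iff_eq_mul]
      exact (T1 i j (j + 1) (by omega) (by omega)).trans (T2 i j (j + 1) (by omega) (by omega))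
  refine ⟨G, _, ι, φ, hE, ?_⟩
  intro u hu
  induction u with
  | nil =>
    have := hmul [] []
    simp only [List.append_nil] at this
    simp only [ev, map_one]
    exact (left_eq_mul.1 this).symm
  | cons c u ih =>
    have hc := hu c (by simp)
    have hu' : Supp (KI (Set.Icc 1 n)) u := fun d hd => hu d (by simp [hd])
    obtain ⟨⟨i, j⟩, hij⟩ := c
    simp only [KI, Set.mem_setOf_eq, Set.mem_Icc] at hc hij
    rw [ev, map_mul, ih hu']
    change _ = ι ([⟨(i, j), hij⟩] ++ u)
    rw [hmul]
    congr 1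
    obtain ⟨i, rfl⟩ := Int.eq_ofNat_of_zero_le hc.1.1
    obtain ⟨j, rfl⟩ := Int.eq_ofNat_of_zero_le hc.2.1
    exact hφb i j (by omega) (by omega) (by omega)

theorem eq_iff_E {u v : List (Chord ℤ)} (hu : Supp (KI (Set.Icc 1 n)) u)
    (hv : Supp (KI (Set.Icc 1 n)) v) (h : ev n u = ev n v) : E CRel u v := by
  obtain ⟨G, _, ι, φ, hE, hφ⟩ := exists_hom n
  rw [← hE, ← hφ u hu, ← hφ v hv, h]

theorem Supp.append {K : Set ℤ} {u v : List (Chord ℤ)} (hu : Supp K u) (hv : Supp K v) :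
    Supp K (u ++ v) := by
  intro c hc
  rcases List.mem_append.1 hc with h | h
  · exact hu c h
  · exact hv c h

theorem mem_on {I : Set ℕ} (hI : I ⊆ Set.Icc 1 n) (x : Braid n) :
    x ∈ dualMonoidOn n I ↔ ∃ u, Supp (KI I) u ∧ ev n u = x := by
  constructor
  · intro hx
    induction hx using Submonoid.closure_induction with
    | mem x hx =>
      obtain ⟨i, j, hi, hj, h1, h2, h3, rfl⟩ := hx
      exact ⟨[ch i j (by omega)], by simp [Supp, KI, hi, hj], by simp [ev]⟩
    | one => exact ⟨[], by simp [Supp], rfl⟩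
    | mul x y _ _ hx hy =>
      obtain ⟨u, hu, rfl⟩ := hx
      obtain ⟨v, hv, rfl⟩ := hy
      exact ⟨v ++ u, hv.append hu, ev_append _ _⟩
  · rintro ⟨u, hu, rfl⟩
    induction u with
    | nil => exact one_mem _
    | cons c u ih =>
      have hu' : Supp (KI I) u := fun d hd => hu d (by simp [hd])
      refine mul_mem (ih hu') (Submonoid.subset_closure ?_)
      have hc := hu c (by simp)
      simp only [KI, Set.mem_setOf_eq] at hc
      have h1 := hI hc.1.2
      have h2 := hI hc.2.2
      have h3 := c.2
      simp only [Set.mem_Icc] at h1 h2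
      exact ⟨_, _, hc.1.2, hc.2.2, by omega, by omega, by omega, rfl⟩

theorem mem_dual (x : Braid n) :
    x ∈ dualMonoid n ↔ ∃ u, Supp (KI (Set.Icc 1 n)) u ∧ ev n u = x := by
  rw [← mem_on subset_rfl]
  have : dualMonoid n = dualMonoidOn n (Set.Icc 1 n) := by
    unfold dualMonoid dualMonoidOn
    congr 1
    ext x
    constructor
    · rintro ⟨i, j, h1, h2, h3, rfl⟩
      exact ⟨i, j, ⟨h1, by omega⟩, ⟨by omega, h3⟩, h1, h2, h3, rfl⟩
    · rintro ⟨i, j, _, _, h1, h2, h3, rfl⟩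
      exact ⟨i, j, h1, h2, h3, rfl⟩
  rw [this]

theorem main (β : Braid n) (hβ : β ∈ dualMonoid n)
    (I : Set ℕ) (hI : I ⊆ Set.Icc 1 n) :
    ∃! β' : Braid n, β' ∈ dualMonoidOn n I ∧ β * β'⁻¹ ∈ dualMonoid n ∧
      ∀ β'' ∈ dualMonoidOn n I, β * β''⁻¹ ∈ dualMonoid n →
        β' * β''⁻¹ ∈ dualMonoidOn n I := by
  have hsub : ∀ {u}, Supp (KI I) u → Supp (KI (Set.Icc 1 n)) u := by
    intro u hu c hc
    have := hu c hc
    exact ⟨⟨this.1.1, hI this.1.2⟩, ⟨this.2.1, hI this.2.2⟩⟩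
  apply existsUnique_of_exists_of_unique
  · obtain ⟨b, hb, rfl⟩ := (mem_dual β).1 hβ
    let P : ℕ → Prop := fun m => ∃ w c, Supp (KI I) w ∧ Supp (KI (Set.Icc 1 n)) c ∧
      ev n (w ++ c) = ev n b ∧ w.length = m
    have hP0 : P 0 := ⟨[], b, by simp [Supp], hb, rfl, rfl⟩
    have hPb : ∀ m, P m → m ≤ b.length := by
      rintro m ⟨w, c, hw, hc, h, rfl⟩
      have := (eq_iff_E ((hsub hw).append hc) hb h).length crel_length
      simp at this; omega
    classical
    have hspec : P (Nat.findGreatest P b.length) := Nat.findGreatest_spec (Nat.zero_le _) hP0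
    have hmax : ∀ m, P m → m ≤ Nat.findGreatest P b.length :=
      fun m hm => Nat.le_findGreatest (hPb m hm) hm
    obtain ⟨w, c, hw, hc, h, hlen⟩ := hspec
    refine ⟨ev n w, (mem_on hI _).2 ⟨w, hw, rfl⟩, ?_, ?_⟩
    · rw [← h, ev_append, mul_inv_cancel_right]
      exact (mem_dual _).2 ⟨c, hc, rfl⟩
    · intro β'' h1 h2
      obtain ⟨w2, hw2, rfl⟩ := (mem_on hI _).1 h1
      obtain ⟨c2, hc2, e2⟩ := (mem_dual _).1 h2
      have e3 : ev n (w2 ++ c2) = ev n b := by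
        rw [ev_append, e2, inv_mul_cancel_right]
      have hE := eq_iff_E ((hsub hw).append hc) ((hsub hw2).append hc2) (h.trans e3.symm)
      obtain ⟨v', u', Z, kv, ku, l1, l2, l3⟩ := lcm_chords (KI I) w w2 c c2 hw hw2 hE
      have hvZ := (crel_supp _ l2).1 hc
      have hZ : Supp (KI (Set.Icc 1 n)) Z := fun d hd => hvZ d (by simp [hd])
      have hP : P (w ++ v').length := by
        refine ⟨w ++ v', Z, hw.append kv, hZ, ?_, rfl⟩
        rw [← h, List.append_assoc]
        exact (ev_E (l2.left w) ((hsub hw).append hc)).symm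
      have := hmax _ hP
      rw [← hlen, List.length_append] at this
      have hv0 : v' = [] := List.eq_nil_of_length_eq_zero (by omega)
      subst hv0
      rw [List.append_nil] at l1
      rw [ev_E l1 (hsub hw), ev_append, mul_inv_cancel_right]
      exact (mem_on hI _).2 ⟨u', ku, rfl⟩
  · rintro x y ⟨hx1, hx2, hx3⟩ ⟨hy1, hy2, hy3⟩
    obtain ⟨u, hu, eu⟩ := (mem_on hI _).1 (hx3 y hy1 hy2)
    obtain ⟨v, hv, ee⟩ := (mem_on hI _).1 (hy3 x hx1 hx2)
    have h1 : ev n (u ++ v) = ev n [] := by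
      rw [ev_append, eu, ee]; simp [ev]
    have := (eq_iff_E (hsub (hu.append hv)) (by simp [Supp]) h1).length crel_length
    have hu0 : u = [] := List.eq_nil_of_length_eq_zero (by simp at this; simp [this])
    subst hu0
    exact (mul_inv_eq_one.1 eu.symm)

end braid

end BKL

/-- Theorem (existence and uniqueness of the maximal right divisor): for every
`β ∈ B_n^{+*}` and `I ⊆ {1,…,n}`, there is a unique `β' ∈ B_I^{+*}` with
`β β'⁻¹ ∈ B_n^{+*}` such that every `β'' ∈ B_I^{+*}` with `β β''⁻¹ ∈ B_n^{+*}`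
satisfies `β' β''⁻¹ ∈ B_I^{+*}`. -/
theorem maximal_right_divisor (n : ℕ) (hn : 2 ≤ n) (β : Braid n) (hβ : β ∈ dualMonoid n)
    (I : Set ℕ) (hI : I ⊆ Set.Icc 1 n) :
    ∃! β' : Braid n, β' ∈ dualMonoidOn n I ∧ β * β'⁻¹ ∈ dualMonoid n ∧
      ∀ β'' ∈ dualMonoidOn n I, β * β''⁻¹ ∈ dualMonoid n →
        β' * β''⁻¹ ∈ dualMonoidOn n I := by
  exact BKL.main β hβ I hI
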